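/- Let M be a perfect matching in G. Then M is Pareto-optimal if and only if there is no alternating cycle ρ with respect to M such that φ(M ⊕ ρ, M) > 0 and φ(M, M ⊕ ρ) = 0. -/

import Mathlib

open Classical

noncomputable section

namespace PopMax

/-- A bipartite preference instance `G = (A ∪ B, E)`:
`E a b` says there is an edge between `a ∈ A` and `b ∈ B`;
`prefA a b b'` says `a` strictly prefers `b` to `b'`;
`prefB b a a'` says `b` strictly prefers `a` to `a'`. -/
structure PrefSys (A : Type*) (B : Type*) where
  E : A → B → Prop
  prefA : A → B → B → Prop
  prefB : B → A → A → Prop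

/-- Every node has a strict (linear) preference order over its neighbors. -/
def PrefSys.IsValid {A B : Type*} (I : PrefSys A B) : Prop :=
  (∀ a b, ¬ I.prefA a b b) ∧
  (∀ a b₁ b₂ b₃, I.prefA a b₁ b₂ → I.prefA a b₂ b₃ → I.prefA a b₁ b₃) ∧
  (∀ a b₁ b₂, I.E a b₁ → I.E a b₂ → b₁ ≠ b₂ → I.prefA a b₁ b₂ ∨ I.prefA a b₂ b₁) ∧
  (∀ b a, ¬ I.prefB b a a) ∧
  (∀ b a₁ a₂ a₃, I.prefB b a₁ a₂ → I.prefB b a₂ a₃ → I.prefB b a₁ a₃) ∧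
  (∀ b a₁ a₂, I.E a₁ b → I.E a₂ b → a₁ ≠ a₂ → I.prefB b a₁ a₂ ∨ I.prefB b a₂ a₁)

variable {A B : Type*}

/-- A matching: a set of pairwise disjoint edges. -/
def IsMatching (I : PrefSys A B) (M : Finset (A × B)) : Prop :=
  (∀ p ∈ M, I.E p.1 p.2) ∧
  (∀ p ∈ M, ∀ q ∈ M, p.1 = q.1 → p = q) ∧
  (∀ p ∈ M, ∀ q ∈ M, p.2 = q.2 → p = q)

def matchedA (M : Finset (A × B)) (a : A) : Prop := ∃ b, (a, b) ∈ M
def matchedB (M : Finset (A × B)) (b : B) : Prop := ∃ a, (a, b) ∈ M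

/-- A maximum matching: a matching of maximum cardinality. -/
def IsMaximumMatching (I : PrefSys A B) (M : Finset (A × B)) : Prop :=
  IsMatching I M ∧ ∀ N : Finset (A × B), IsMatching I N → N.card ≤ M.card

/-- A perfect matching matches all nodes. -/
def IsPerfectMatching (I : PrefSys A B) (M : Finset (A × B)) : Prop :=
  IsMatching I M ∧ (∀ a, matchedA M a) ∧ (∀ b, matchedB M b)

/-- `a ∈ A` prefers matching `M` to matching `N`. -/
def prefersA (I : PrefSys A B) (a : A) (M N : Finset (A × B)) : Prop :=
  ∃ b, (a, b) ∈ M ∧ (¬ matchedA N a ∨ ∃ b', (a, b') ∈ N ∧ I.prefA a b b')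

/-- `b ∈ B` prefers matching `M` to matching `N`. -/
def prefersB (I : PrefSys A B) (b : B) (M N : Finset (A × B)) : Prop :=
  ∃ a, (a, b) ∈ M ∧ (¬ matchedB N b ∨ ∃ a', (a', b) ∈ N ∧ I.prefB b a a')

/-- A node `u ∈ A ∪ B` prefers matching `M` to matching `N`. -/
def prefers (I : PrefSys A B) (u : A ⊕ B) (M N : Finset (A × B)) : Prop :=
  match u with
  | Sum.inl a => prefersA I a M N
  | Sum.inr b => prefersB I b M N

/-- `φ(M,N)`: the number of nodes preferring `M` to `N`. -/
def phi [Fintype A] [Fintype B] (I : PrefSys A B) (M N : Finset (A × B)) : ℕ :=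
  (Finset.univ.filter (fun u : A ⊕ B => prefers I u M N)).card

/-- `Δ(M,N) = φ(M,N) − φ(N,M)`. -/
def Delta [Fintype A] [Fintype B] (I : PrefSys A B) (M N : Finset (A × B)) : ℤ :=
  (phi I M N : ℤ) - (phi I N M : ℤ)

/-- A popular max-matching: a maximum matching `M` with `Δ(M,N) ≥ 0`
for every maximum matching `N`. -/
def IsPopularMaxMatching [Fintype A] [Fintype B] (I : PrefSys A B)
    (M : Finset (A × B)) : Prop :=
  IsMaximumMatching I M ∧
    ∀ N : Finset (A × B), IsMaximumMatching I N → 0 ≤ Delta I M N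

/-- The edge `(a,b) ∉ M` blocks `M`. -/
def Blocks (I : PrefSys A B) (M : Finset (A × B)) (a : A) (b : B) : Prop :=
  I.E a b ∧ (a, b) ∉ M ∧
  (¬ matchedA M a ∨ ∃ b', (a, b') ∈ M ∧ I.prefA a b b') ∧
  (¬ matchedB M b ∨ ∃ a', (a', b) ∈ M ∧ I.prefB b a a')

/-- A stable matching: a matching with no blocking edge. -/
def IsStable (I : PrefSys A B) (S : Finset (A × B)) : Prop :=
  IsMatching I S ∧ ∀ a b, ¬ Blocks I S a b

/-- The edge weight `wt_M(a,b) ∈ {0, ±2}`. -/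
def wt (I : PrefSys A B) (M : Finset (A × B)) (a : A) (b : B) : ℤ :=
  if Blocks I M a b then 2
  else if (∃ b', (a, b') ∈ M ∧ I.prefA a b' b) ∧ (∃ a', (a', b) ∈ M ∧ I.prefB b a' a) then -2
  else 0

/-- The underlying simple graph on the node set `A ⊕ B`. -/
def graphOf (I : PrefSys A B) : SimpleGraph (A ⊕ B) :=
  SimpleGraph.fromRel (fun u w =>
    match u, w with
    | Sum.inl a, Sum.inr b => I.E a b
    | _, _ => False)

/-- The (undirected) edge `e` is an edge of the matching `M`. -/
def edgeInM (M : Finset (A × B)) (e : Sym2 (A ⊕ B)) : Prop :=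
  ∃ a b, (a, b) ∈ M ∧ e = s(Sum.inl a, Sum.inr b)

/-- Consecutive edges alternate between `M` and `E ∖ M`. -/
def altRel (M : Finset (A × B)) (e f : Sym2 (A ⊕ B)) : Prop :=
  edgeInM M e ↔ ¬ edgeInM M f

/-- An alternating path with respect to `M`. -/
def IsAltPath (I : PrefSys A B) (M : Finset (A × B)) {u w : A ⊕ B}
    (p : (graphOf I).Walk u w) : Prop :=
  p.IsPath ∧ List.Chain' (altRel M) p.edges

/-- An alternating cycle with respect to `M` (alternation also across the wrap-around). -/
def IsAltCycle (I : PrefSys A B) (M : Finset (A × B)) {w : A ⊕ B}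
    (c : (graphOf I).Walk w w) : Prop :=
  c.IsCycle ∧ List.Chain' (altRel M) (c.edges ++ c.edges.take 1)

/-- `wt_M` as a function on undirected edges. -/
def wtSym (I : PrefSys A B) (M : Finset (A × B)) : Sym2 (A ⊕ B) → ℤ :=
  Sym2.lift ⟨fun u w =>
      match u, w with
      | Sum.inl a, Sum.inr b => wt I M a b
      | Sum.inr b, Sum.inl a => wt I M a b
      | _, _ => 0,
    by rintro (a | b) (a' | b') <;> rfl⟩

/-- `wt_M(ρ) = Σ_{e ∈ ρ} wt_M(e)` for a walk `ρ`. -/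
def wtWalk (I : PrefSys A B) (M : Finset (A × B)) {u w : A ⊕ B}
    (p : (graphOf I).Walk u w) : ℤ :=
  (p.edges.map (wtSym I M)).sum

/-- The node `u ∈ A ∪ B` is unmatched in `M`. -/
def unmatchedNode (M : Finset (A × B)) : A ⊕ B → Prop
  | Sum.inl a => ¬ matchedA M a
  | Sum.inr b => ¬ matchedB M b

/-- The set of edges `(a,b) ∈ A × B` used by the walk `p`. -/
def pairsOf [Fintype A] [Fintype B] (I : PrefSys A B) {u w : A ⊕ B}
    (p : (graphOf I).Walk u w) : Finset (A × B) :=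
  Finset.univ.filter (fun ab : A × B => s(Sum.inl ab.1, Sum.inr ab.2) ∈ p.edges)

/-- `M` is Pareto-optimal: no matching `N` has `φ(N,M) > 0` and `φ(M,N) = 0`. -/
def IsParetoOptimal [Fintype A] [Fintype B] (I : PrefSys A B) (M : Finset (A × B)) : Prop :=
  ¬ ∃ N : Finset (A × B), IsMatching I N ∧ 0 < phi I N M ∧ phi I M N = 0

/-! ### The auxiliary instance `G*` -/

/-- `A* = {a_0, …, a_{n0−1} : a ∈ A}` where `n0 = |A|`. -/
abbrev AStar (A : Type*) [Fintype A] : Type _ := A × Fin (Fintype.card A)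

/-- `B* = B̃ ∪ {d_1(a), …, d_{n0−1}(a) : a ∈ A}`; the dummy node `(a, j)`
(with `j : Fin (n0 − 1)`) stands for `d_{j+1}(a)`. -/
abbrev BStar (A : Type*) (B : Type*) [Fintype A] : Type _ :=
  B ⊕ (A × Fin (Fintype.card A - 1))

/-- The auxiliary instance `G*` with its edges and preferences. -/
def starSys [Fintype A] (I : PrefSys A B) : PrefSys (AStar A) (BStar A B) where
  E := fun ai w =>
    match ai, w with
    | (a, _i), Sum.inl b => I.E a b
    | (a, i), Sum.inr (a', j) => a = a' ∧ ((i : ℕ) = (j : ℕ) ∨ (i : ℕ) = (j : ℕ) + 1)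
  prefA := fun ai u v =>
    match ai, u, v with
    | (a, _i), Sum.inl b, Sum.inl b' => I.prefA a b b'
    | (a, i), Sum.inl _b, Sum.inr (a', j) => a = a' ∧ (j : ℕ) = (i : ℕ)
    | (a, i), Sum.inr (a', j), Sum.inl _b => a = a' ∧ (j : ℕ) + 1 = (i : ℕ)
    | (a, i), Sum.inr (a', j), Sum.inr (a'', j') =>
        a = a' ∧ a = a'' ∧ (j : ℕ) + 1 = (i : ℕ) ∧ (j' : ℕ) = (i : ℕ)
  prefB := fun w x y =>
    match w, x, y with
    | Sum.inl b, (a, i), (a', i') =>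
        (i' : ℕ) < (i : ℕ) ∨ ((i : ℕ) = (i' : ℕ) ∧ I.prefB b a a')
    | Sum.inr (a, j), (a', i), (a'', i') =>
        a' = a ∧ a'' = a ∧ (i : ℕ) = (j : ℕ) ∧ (i' : ℕ) = (j : ℕ) + 1

/-- The projection `S ↦ S'`: delete edges incident to dummy nodes and replace
`(a_i, b̃)` by `(a, b)`. -/
def proj [Fintype A] [Fintype B] (S : Finset (AStar A × BStar A B)) : Finset (A × B) :=
  Finset.univ.filter (fun ab : A × B =>
    ∃ i : Fin (Fintype.card A), ((ab.1, i), (Sum.inl ab.2 : BStar A B)) ∈ S)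

/-- `a ∈ A_i` for the level partition of `A` induced by a (stable) matching `S` in `G*`:
for `i ≤ n0 − 2`, `a ∈ A_i` iff `(a_i, b̃) ∈ S` for some `b̃ ∈ B̃`;
`A_{n0−1}` consists of all remaining nodes of `A`. -/
def AtLevelA [Fintype A] (S : Finset (AStar A × BStar A B)) (a : A) (i : ℕ) : Prop :=
  (i + 1 < Fintype.card A ∧
     ∃ j : Fin (Fintype.card A), (j : ℕ) = i ∧
       ∃ b : B, ((a, j), (Sum.inl b : BStar A B)) ∈ S) ∨
  (i + 1 = Fintype.card A ∧
     ∀ j : Fin (Fintype.card A), (j : ℕ) + 1 < Fintype.card A →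
       ∀ b : B, ((a, j), (Sum.inl b : BStar A B)) ∉ S)

/-- `b ∈ B_i` for the level partition of `B` induced by a (stable) matching `S` in `G*`:
for `1 ≤ i ≤ n0 − 1`, `b ∈ B_i` iff `(a_i, b̃) ∈ S` for some `a ∈ A_i`;
`B_0` consists of all remaining nodes of `B`. -/
def AtLevelB [Fintype A] (S : Finset (AStar A × BStar A B)) (b : B) (i : ℕ) : Prop :=
  (1 ≤ i ∧ i < Fintype.card A ∧
     ∃ j : Fin (Fintype.card A), (j : ℕ) = i ∧
       ∃ a : A, AtLevelA S a i ∧ ((a, j), (Sum.inl b : BStar A B)) ∈ S) ∨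
  (i = 0 ∧ ∀ j : Fin (Fintype.card A), 1 ≤ (j : ℕ) →
       ∀ a : A, AtLevelA S a (j : ℕ) → ((a, j), (Sum.inl b : BStar A B)) ∉ S)


theorem edgeInM_mk (M : Finset (A × B)) (a : A) (b : B) :
    edgeInM M s(Sum.inl a, Sum.inr b) ↔ (a, b) ∈ M := by
  constructor
  · rintro ⟨a', b', h, e⟩
    simp at e
    obtain ⟨rfl, rfl⟩ := e
    exact h
  · intro h
    exact ⟨a, b, h, rfl⟩

/-- two different edges of an alternating cycle at the same vertex alternate -/
theorem altCycle_local {I : PrefSys A B} {M : Finset (A × B)} {w : A ⊕ B}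
    {c : (graphOf I).Walk w w} (hc : IsAltCycle I M c) {x y z : A ⊕ B}
    (hy : s(x, y) ∈ c.edges) (hz : s(x, z) ∈ c.edges) (hyz : y ≠ z) :
    altRel M s(x, y) s(x, z) := by
  obtain ⟨hcyc, hch⟩ := hc
  have hx : x ∈ c.support := c.fst_mem_support_of_mem_edges hy
  have hcyc' : (c.rotate x hx).IsCycle := hcyc.rotate hx
  have hrot := c.rotate_edges x hx
  have hC : Cycle.Chain (altRel M) (c.edges : Cycle _) := by
    cases hce : c.edges with
    | nil => simp [hce] at hy
    | cons e l => rw [hce] at hch; exact hch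
  have hC' : Cycle.Chain (altRel M) ((c.rotate x hx).edges : Cycle _) := by
    rw [Cycle.coe_eq_coe.2 hrot]; exact hC
  rw [← hrot.mem_iff] at hy hz
  generalize c.rotate x hx = d at *
  have hne := hcyc'.snd_ne_penultimate
  have hnb := hcyc'.neighborSet_toSubgraph_endpoint
  have hy' : y ∈ d.toSubgraph.neighborSet x := by
    simpa [SimpleGraph.Walk.adj_toSubgraph_iff_mem_edges] using hy
  have hz' : z ∈ d.toSubgraph.neighborSet x := by
    simpa [SimpleGraph.Walk.adj_toSubgraph_iff_mem_edges] using hz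
  rw [hnb] at hy' hz'
  have hnn : d.edges ≠ [] := by intro h; rw [h] at hy; simp at hy
  have hkey : altRel M s(x, d.penultimate) s(x, d.snd) := by
    rw [Cycle.chain_ne_nil _ hnn] at hC'
    cases d with
    | nil => simp at hnn
    | cons h q =>
      have hl : (SimpleGraph.Walk.cons h q).edges.getLast hnn
          = s(x, (SimpleGraph.Walk.cons h q).penultimate) := by
        rw [SimpleGraph.Walk.getLast_edges_eq_mk_penultimate_end, Sym2.eq_swap]
      rw [hl] at hC'
      simp only [SimpleGraph.Walk.edges_cons, List.isChain_cons_cons] at hC'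
      simpa using hC'.1
  have hkey' : altRel M s(x, d.snd) s(x, d.penultimate) := by
    unfold altRel at *; tauto
  simp only [Set.mem_insert_iff, Set.mem_singleton_iff] at hy' hz'
  rcases hy' with rfl | rfl <;> rcases hz' with rfl | rfl
  · exact absurd rfl hyz
  · exact hkey'
  · exact hkey
  · exact absurd rfl hyz

theorem altCycle_other {I : PrefSys A B} {M : Finset (A × B)} {w : A ⊕ B}
    {c : (graphOf I).Walk w w} (hc : IsAltCycle I M c) {x y : A ⊕ B}
    (hy : s(x, y) ∈ c.edges) : ∃ z, z ≠ y ∧ s(x, z) ∈ c.edges := by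
  have hx : x ∈ c.support := c.fst_mem_support_of_mem_edges hy
  have h2 := hc.1.ncard_neighborSet_toSubgraph_eq_two hx
  obtain ⟨z, hz, hne⟩ := Set.exists_ne_of_one_lt_ncard (by rw [h2]; norm_num) y
  refine ⟨z, hne, ?_⟩
  simpa [SimpleGraph.Walk.adj_toSubgraph_iff_mem_edges] using hz

theorem graphOf_adj (I : PrefSys A B) (a : A) (b : B) :
    (graphOf I).Adj (Sum.inl a) (Sum.inr b) ↔ I.E a b := by
  simp [graphOf]

theorem graphOf_inl (I : PrefSys A B) {a : A} {z : A ⊕ B}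
    (h : (graphOf I).Adj (Sum.inl a) z) : ∃ b, z = Sum.inr b := by
  rcases z with a' | b
  · simp [graphOf] at h
  · exact ⟨b, rfl⟩

theorem graphOf_inr (I : PrefSys A B) {b : B} {z : A ⊕ B}
    (h : (graphOf I).Adj (Sum.inr b) z) : ∃ a, z = Sum.inl a := by
  rcases z with a | b'
  · exact ⟨a, rfl⟩
  · simp [graphOf] at h

theorem mem_pairsOf [Fintype A] [Fintype B] {I : PrefSys A B} {u w : A ⊕ B}
    {p : (graphOf I).Walk u w} {a : A} {b : B} :
    (a, b) ∈ pairsOf I p ↔ s(Sum.inl a, Sum.inr b) ∈ p.edges := by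
  simp [pairsOf]

theorem isMatching_symmDiff [Fintype A] [Fintype B] [DecidableEq (A × B)]
    {I : PrefSys A B} {M : Finset (A × B)}
    (hM : IsMatching I M) {w : A ⊕ B} {c : (graphOf I).Walk w w} (hc : IsAltCycle I M c) :
    IsMatching I (symmDiff M (pairsOf I c)) := by
  obtain ⟨hE, hMA, hMB⟩ := hM
  -- local facts on both sides
  have locA : ∀ a b b', (a, b) ∈ pairsOf I c → (a, b') ∈ pairsOf I c → b ≠ b' →
      ((a, b) ∈ M ↔ (a, b') ∉ M) := by
    intro a b b' h h' hne
    have := altCycle_local hc (mem_pairsOf.1 h) (mem_pairsOf.1 h') (by simpa using hne)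
    simpa only [altRel, edgeInM_mk] using this
  have locB : ∀ b a a', (a, b) ∈ pairsOf I c → (a', b) ∈ pairsOf I c → a ≠ a' →
      ((a, b) ∈ M ↔ (a', b) ∉ M) := by
    intro b a a' h h' hne
    have h1 := mem_pairsOf.1 h
    have h2 := mem_pairsOf.1 h'
    rw [Sym2.eq_swap] at h1 h2
    have := altCycle_local hc h1 h2 (by simpa using hne)
    rw [Sym2.eq_swap, Sym2.eq_swap (a := Sum.inr b) (b := Sum.inl a')] at this
    simpa only [altRel, edgeInM_mk] using this
  have othA : ∀ a b, (a, b) ∈ pairsOf I c → ∃ b', b' ≠ b ∧ (a, b') ∈ pairsOf I c := by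
    intro a b h
    obtain ⟨z, hz, hz'⟩ := altCycle_other hc (mem_pairsOf.1 h)
    obtain ⟨b', rfl⟩ := graphOf_inl I (c.adj_of_mem_edges hz')
    exact ⟨b', by simpa using hz, mem_pairsOf.2 hz'⟩
  have othB : ∀ a b, (a, b) ∈ pairsOf I c → ∃ a', a' ≠ a ∧ (a', b) ∈ pairsOf I c := by
    intro a b h
    have h1 := mem_pairsOf.1 h
    rw [Sym2.eq_swap] at h1
    obtain ⟨z, hz, hz'⟩ := altCycle_other hc h1
    obtain ⟨a', rfl⟩ := graphOf_inr I (c.adj_of_mem_edges hz')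
    rw [Sym2.eq_swap] at hz'
    exact ⟨a', by simpa using hz, mem_pairsOf.2 hz'⟩
  refine ⟨?_, ?_, ?_⟩
  · rintro ⟨a, b⟩ h
    rcases Finset.mem_symmDiff.1 h with h | h
    · exact hE _ h.1
    · exact (graphOf_adj I a b).1 (c.adj_of_mem_edges (mem_pairsOf.1 h.1))
  · rintro ⟨a, b⟩ h ⟨a', b'⟩ h' (rfl : a = a')
    by_contra hne
    have hbb : b ≠ b' := by rintro rfl; exact hne rfl
    have hMA' : ∀ b₁ b₂, (a, b₁) ∈ M → (a, b₂) ∈ M → b₁ = b₂ := fun b₁ b₂ h₁ h₂ => by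
      simpa using hMA _ h₁ _ h₂ rfl
    rw [Finset.mem_symmDiff] at h h'
    grind
  · rintro ⟨a, b⟩ h ⟨a', b'⟩ h' (rfl : b = b')
    by_contra hne
    have hbb : a ≠ a' := by rintro rfl; exact hne rfl
    have hMB' : ∀ b₁ b₂, (b₁, b) ∈ M → (b₂, b) ∈ M → b₁ = b₂ := fun b₁ b₂ h₁ h₂ => by
      simpa using hMB _ h₁ _ h₂ rfl
    rw [Finset.mem_symmDiff] at h h'
    grind

/-- The graph of a set of pairs. -/
def pairGraph (D : Finset (A × B)) : SimpleGraph (A ⊕ B) where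
  Adj u w := edgeInM D s(u, w)
  symm := ⟨fun u w h => by rwa [Sym2.eq_swap]⟩
  loopless := ⟨by
    rintro (a | b) ⟨a', b', _, h⟩ <;> simp at h⟩

theorem pairGraph_adj (D : Finset (A × B)) (a : A) (b : B) :
    (pairGraph D).Adj (Sum.inl a) (Sum.inr b) ↔ (a, b) ∈ D := edgeInM_mk D a b

theorem pairGraph_inl (D : Finset (A × B)) {a : A} {z : A ⊕ B} :
    (pairGraph D).Adj (Sum.inl a) z ↔ ∃ b, z = Sum.inr b ∧ (a, b) ∈ D := by
  rcases z with a' | b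
  · simp [pairGraph, edgeInM]
  · simp [pairGraph_adj]

theorem pairGraph_inr (D : Finset (A × B)) {b : B} {z : A ⊕ B} :
    (pairGraph D).Adj (Sum.inr b) z ↔ ∃ a, z = Sum.inl a ∧ (a, b) ∈ D := by
  rcases z with a | b'
  · rw [SimpleGraph.adj_comm]; simp [pairGraph_adj]
  · simp [pairGraph, edgeInM]

theorem pairGraph_isCycles [DecidableEq (A × B)] {I : PrefSys A B} {M N : Finset (A × B)}
    (hM : IsPerfectMatching I M) (hN : IsPerfectMatching I N) :
    (pairGraph (symmDiff M N)).IsCycles := by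
  obtain ⟨⟨_, hMA, hMB⟩, mA, mB⟩ := hM
  obtain ⟨⟨_, hNA, hNB⟩, nA, nB⟩ := hN
  rintro (a | b) ⟨z, hz⟩
  · obtain ⟨b, hb⟩ := mA a
    obtain ⟨b', hb'⟩ := nA a
    have e1 : ∀ y, (a, y) ∈ M → y = b := fun y hy => by simpa using hMA _ hy _ hb rfl
    have e2 : ∀ y, (a, y) ∈ N → y = b' := fun y hy => by simpa using hNA _ hy _ hb' rfl
    obtain ⟨y, rfl, hy⟩ := (pairGraph_inl _).1 hz
    rw [Finset.mem_symmDiff] at hy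
    have hne : b ≠ b' := by grind
    have : (pairGraph (symmDiff M N)).neighborSet (Sum.inl a) = {Sum.inr b, Sum.inr b'} := by
      ext x
      simp only [SimpleGraph.mem_neighborSet, pairGraph_inl, Finset.mem_symmDiff,
        Set.mem_insert_iff, Set.mem_singleton_iff]
      grind
    rw [this, Set.ncard_pair (by simpa using hne)]
  · obtain ⟨a, hb⟩ := mB b
    obtain ⟨a', hb'⟩ := nB b
    have e1 : ∀ y, (y, b) ∈ M → y = a := fun y hy => by simpa using hMB _ hy _ hb rfl
    have e2 : ∀ y, (y, b) ∈ N → y = a' := fun y hy => by simpa using hNB _ hy _ hb' rfl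
    obtain ⟨y, rfl, hy⟩ := (pairGraph_inr _).1 hz
    rw [Finset.mem_symmDiff] at hy
    have hne : a ≠ a' := by grind
    have : (pairGraph (symmDiff M N)).neighborSet (Sum.inr b) = {Sum.inl a, Sum.inl a'} := by
      ext x
      simp only [SimpleGraph.mem_neighborSet, pairGraph_inr, Finset.mem_symmDiff,
        Set.mem_insert_iff, Set.mem_singleton_iff]
      grind
    rw [this, Set.ncard_pair (by simpa using hne)]

theorem pairGraph_alt [DecidableEq (A × B)] {I : PrefSys A B} {M N : Finset (A × B)}
    (hM : IsMatching I M) (hN : IsMatching I N) {x y z : A ⊕ B}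
    (hx : (pairGraph (symmDiff M N)).Adj x y) (hz : (pairGraph (symmDiff M N)).Adj y z)
    (hne : s(x, y) ≠ s(y, z)) : altRel M s(x, y) s(y, z) := by
  obtain ⟨_, hMA, hMB⟩ := hM
  obtain ⟨_, hNA, hNB⟩ := hN
  rw [SimpleGraph.adj_comm] at hx
  rcases y with a | b
  · obtain ⟨b, rfl, hb⟩ := (pairGraph_inl _).1 hx
    obtain ⟨b', rfl, hb'⟩ := (pairGraph_inl _).1 hz
    rw [Sym2.eq_swap] at hne ⊢
    have hne' : b ≠ b' := by rintro rfl; exact hne rfl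
    rw [altRel, edgeInM_mk, edgeInM_mk]
    rw [Finset.mem_symmDiff] at hb hb'
    have h1 := hMA (a, b)
    have h2 := hNA (a, b)
    grind
  · obtain ⟨a, rfl, hb⟩ := (pairGraph_inr _).1 hx
    obtain ⟨a', rfl, hb'⟩ := (pairGraph_inr _).1 hz
    rw [Sym2.eq_swap (a := Sum.inr b)] at hne ⊢
    have hne' : a ≠ a' := by rintro rfl; exact hne rfl
    rw [altRel, edgeInM_mk, edgeInM_mk]
    rw [Finset.mem_symmDiff] at hb hb'
    have h1 := hMB (a, b)
    have h2 := hNB (a, b)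
    grind

theorem walk_alt [DecidableEq (A × B)] {I : PrefSys A B} {M N : Finset (A × B)}
    (hM : IsMatching I M) (hN : IsMatching I N) {u w : A ⊕ B}
    (p : (pairGraph (symmDiff M N)).Walk u w) (hp : p.edges.IsChain (· ≠ ·)) :
    p.edges.IsChain (altRel M) := by
  induction p with
  | nil => simp
  | cons h q ih =>
    cases q with
    | nil => simp
    | cons h' r =>
      simp only [SimpleGraph.Walk.edges_cons, List.isChain_cons_cons] at hp ih ⊢
      exact ⟨pairGraph_alt hM hN h h' hp.1, ih hp.2⟩

theorem cycle_alt [DecidableEq (A × B)] {I : PrefSys A B} {M N : Finset (A × B)}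
    (hM : IsMatching I M) (hN : IsMatching I N) {u : A ⊕ B}
    (p : (pairGraph (symmDiff M N)).Walk u u) (hp : p.IsCycle) :
    (p.edges ++ p.edges.take 1).IsChain (altRel M) := by
  have hnd := hp.edges_nodup
  have hlen := hp.three_le_length
  cases p with
  | nil => simp at hlen
  | cons h q =>
    have := walk_alt hM hN ((SimpleGraph.Walk.cons h q).append (.cons h .nil))
    simp only [SimpleGraph.Walk.edges_append] at this
    simp only [SimpleGraph.Walk.edges_cons, SimpleGraph.Walk.edges_nil] at this hnd ⊢
    refine this ?_
    rw [List.isChain_append]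
    refine ⟨List.Pairwise.isChain hnd, by simp, ?_⟩
    intro x hx y hy
    have hq : q.edges ≠ [] := by
      intro h0
      have := congrArg List.length h0
      rw [SimpleGraph.Walk.length_edges, List.length_nil] at this
      rw [SimpleGraph.Walk.length_cons] at hlen
      omega
    rw [List.getLast?_cons, List.getLast?_eq_some_getLast hq] at hx
    simp only [Option.getD_some, Option.mem_def, Option.some.injEq, List.head?_cons] at hx hy
    subst hy
    intro he
    have : x ∈ q.edges := hx ▸ List.getLast_mem hq
    rw [List.nodup_cons] at hnd
    exact hnd.1 (he ▸ this)

theorem prefersA_congr {I : PrefSys A B} {a : A} {M M' N N' : Finset (A × B)}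
    (h : ∀ b, (a, b) ∈ M ↔ (a, b) ∈ M') (h' : ∀ b, (a, b) ∈ N ↔ (a, b) ∈ N') :
    prefersA I a M N ↔ prefersA I a M' N' := by
  simp only [prefersA, matchedA, h, h']

theorem prefersB_congr {I : PrefSys A B} {b : B} {M M' N N' : Finset (A × B)}
    (h : ∀ a, (a, b) ∈ M ↔ (a, b) ∈ M') (h' : ∀ a, (a, b) ∈ N ↔ (a, b) ∈ N') :
    prefersB I b M N ↔ prefersB I b M' N' := by
  simp only [prefersB, matchedB, h, h']

theorem not_prefers_self {I : PrefSys A B} (hI : I.IsValid) {M : Finset (A × B)}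
    (hM : IsPerfectMatching I M) (u : A ⊕ B) : ¬ prefers I u M M := by
  obtain ⟨⟨_, hMA, hMB⟩, mA, mB⟩ := hM
  obtain ⟨iA, _, _, iB, _⟩ := hI
  rcases u with a | b
  · rintro ⟨b, hb, h | ⟨b', hb', h⟩⟩
    · exact h (mA a)
    · have : b = b' := by simpa using hMA _ hb _ hb' rfl
      subst this
      exact iA _ _ h
  · rintro ⟨a, hb, h | ⟨a', hb', h⟩⟩
    · exact h (mB b)
    · have : a = a' := by simpa using hMB _ hb _ hb' rfl
      subst this
      exact iB _ _ h

theorem phi_pos [Fintype A] [Fintype B] {I : PrefSys A B} {M N : Finset (A × B)} :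
    0 < phi I M N ↔ ∃ u, prefers I u M N := by
  simp [phi, Finset.card_pos, Finset.Nonempty]

theorem phi_zero [Fintype A] [Fintype B] {I : PrefSys A B} {M N : Finset (A × B)} :
    phi I M N = 0 ↔ ∀ u, ¬ prefers I u M N := by
  simp [phi, Finset.filter_eq_empty_iff]

theorem exists_cycle [Fintype A] [Fintype B] [DecidableEq (A × B)] {I : PrefSys A B}
    (hI : I.IsValid) {M N : Finset (A × B)} (hM : IsPerfectMatching I M) (hN : IsMatching I N)
    (h1 : 0 < phi I N M) (h0 : phi I M N = 0) :
    ∃ (v : A ⊕ B) (c : (graphOf I).Walk v v), IsAltCycle I M c ∧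
          0 < phi I (symmDiff M (pairsOf I c)) M ∧
          phi I M (symmDiff M (pairsOf I c)) = 0 := by
  rw [phi_zero] at h0
  obtain ⟨u, hu⟩ := phi_pos.1 h1
  have hNp : IsPerfectMatching I N := by
    refine ⟨hN, fun a => ?_, fun b => ?_⟩
    · by_contra hna
      obtain ⟨b, hb⟩ := hM.2.1 a
      exact h0 (Sum.inl a) ⟨b, hb, Or.inl hna⟩
    · by_contra hna
      obtain ⟨a, hb⟩ := hM.2.2 b
      exact h0 (Sum.inr b) ⟨a, hb, Or.inl hna⟩
  have hcyc := pairGraph_isCycles hM hNp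
  have hle : pairGraph (symmDiff M N) ≤ graphOf I := by
    intro x y hxy
    obtain ⟨a, b, hab, he⟩ := hxy
    have hE : (graphOf I).Adj (Sum.inl a) (Sum.inr b) := by
      rw [graphOf_adj]
      rcases Finset.mem_symmDiff.1 hab with h | h
      · exact hM.1.1 _ h.1
      · exact hN.1 _ h.1
    rw [← SimpleGraph.mem_edgeSet] at hE ⊢
    rwa [he]
  have hns : ((pairGraph (symmDiff M N)).neighborSet u).Nonempty := by
    by_contra hemp
    rw [Set.not_nonempty_iff_eq_empty, Set.eq_empty_iff_forall_notMem] at hemp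
    apply not_prefers_self hI hM u
    rcases u with a | b
    · refine (prefersA_congr (fun b => ?_) (fun b => Iff.rfl)).1 hu
      have := hemp (Sum.inr b)
      rw [SimpleGraph.mem_neighborSet, pairGraph_adj, Finset.mem_symmDiff] at this
      tauto
    · refine (prefersB_congr (fun a => ?_) (fun b => Iff.rfl)).1 hu
      have := hemp (Sum.inl a)
      rw [SimpleGraph.mem_neighborSet, SimpleGraph.adj_comm, pairGraph_adj,
        Finset.mem_symmDiff] at this
      tauto
  obtain ⟨p, hp, -⟩ := hcyc.exists_cycle_toSubgraph_verts_eq_connectedComponentSupp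
    (c := (pairGraph (symmDiff M N)).connectedComponentMk u) rfl hns
  have hedge : ∀ x y, x ∈ p.support → (s(x, y) ∈ p.edges ↔
      (pairGraph (symmDiff M N)).Adj x y) := by
    intro x y hx
    rw [← SimpleGraph.Walk.adj_toSubgraph_iff_mem_edges]
    exact hp.adj_toSubgraph_iff_of_isCycles hcyc (by simpa using hx) y
  -- description of the new matching
  have hmem : ∀ a b, (a, b) ∈ pairsOf I (p.mapLe hle) ↔ s(Sum.inl a, Sum.inr b) ∈ p.edges := by
    intro a b
    rw [mem_pairsOf, SimpleGraph.Walk.edges_mapLe_eq_edges]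
  have onA : ∀ a, Sum.inl a ∈ p.support → ∀ b,
      ((a, b) ∈ symmDiff M (pairsOf I (p.mapLe hle)) ↔ (a, b) ∈ N) := by
    intro a ha b
    rw [Finset.mem_symmDiff, hmem, hedge _ _ ha, pairGraph_adj, Finset.mem_symmDiff]
    tauto
  have offA : ∀ a, Sum.inl a ∉ p.support → ∀ b,
      ((a, b) ∈ symmDiff M (pairsOf I (p.mapLe hle)) ↔ (a, b) ∈ M) := by
    intro a ha b
    have : s(Sum.inl a, Sum.inr b) ∉ p.edges := fun h => ha (p.fst_mem_support_of_mem_edges h)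
    rw [Finset.mem_symmDiff, hmem]
    tauto
  have onB : ∀ b, Sum.inr b ∈ p.support → ∀ a,
      ((a, b) ∈ symmDiff M (pairsOf I (p.mapLe hle)) ↔ (a, b) ∈ N) := by
    intro b ha a
    rw [Finset.mem_symmDiff, hmem, Sym2.eq_swap, hedge _ _ ha, SimpleGraph.adj_comm,
      pairGraph_adj, Finset.mem_symmDiff]
    tauto
  have offB : ∀ b, Sum.inr b ∉ p.support → ∀ a,
      ((a, b) ∈ symmDiff M (pairsOf I (p.mapLe hle)) ↔ (a, b) ∈ M) := by
    intro b ha a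
    have : s(Sum.inl a, Sum.inr b) ∉ p.edges := fun h => ha (p.snd_mem_support_of_mem_edges h)
    rw [Finset.mem_symmDiff, hmem]
    tauto
  refine ⟨u, p.mapLe hle, ⟨hp.mapLe hle, ?_⟩, ?_, ?_⟩
  · rw [SimpleGraph.Walk.edges_mapLe_eq_edges]
    exact cycle_alt hM.1 hN p hp
  · rw [phi_pos]
    refine ⟨u, ?_⟩
    have hus := p.start_mem_support
    rcases u with a | b
    · exact (prefersA_congr (onA a hus) (fun b => Iff.rfl)).2 hu
    · exact (prefersB_congr (onB b hus) (fun b => Iff.rfl)).2 hu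
  · rw [phi_zero]
    rintro (a | b) hx
    · by_cases ha : Sum.inl a ∈ p.support
      · exact h0 (Sum.inl a) ((prefersA_congr (fun b => Iff.rfl) (onA a ha)).1 hx)
      · exact not_prefers_self hI hM (Sum.inl a)
          ((prefersA_congr (fun b => Iff.rfl) (offA a ha)).1 hx)
    · by_cases ha : Sum.inr b ∈ p.support
      · exact h0 (Sum.inr b) ((prefersB_congr (fun b => Iff.rfl) (onB b ha)).1 hx)
      · exact not_prefers_self hI hM (Sum.inr b)
          ((prefersB_congr (fun b => Iff.rfl) (offB b ha)).1 hx)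

/-- A perfect matching `M` is Pareto-optimal iff there is no
alternating cycle `ρ` wrt `M` with `φ(M ⊕ ρ, M) > 0` and `φ(M, M ⊕ ρ) = 0`. -/
theorem stmt18 {A B : Type*} [Fintype A] [Fintype B] [DecidableEq A] [DecidableEq B]
    (I : PrefSys A B) (hI : I.IsValid) (M : Finset (A × B))
    (hM : IsPerfectMatching I M) :
    IsParetoOptimal I M ↔
      ¬ ∃ (v : A ⊕ B) (c : (graphOf I).Walk v v), IsAltCycle I M c ∧
          0 < phi I (symmDiff M (pairsOf I c)) M ∧
          phi I M (symmDiff M (pairsOf I c)) = 0 := by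
  constructor
  · rintro hP ⟨v, c, hc, h1, h0⟩
    exact hP ⟨_, isMatching_symmDiff hM.1 hc, h1, h0⟩
  · rintro hno ⟨N, hN, h1, h0⟩
    exact hno (exists_cycle hI hM hN h1 h0)

end PopMax
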